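/- For every M > 0 there exists a constant c > 0 such that for every real t ∈ [0,2π] and every eigenfunction Ψ of L_t with ‖Ψ‖ = 1 whose eigenvalue λ satisfies |λ| ≤ M, one has |Ψ(x)| ≤ c for all x ∈ [0,1]. (This is the content of Lemma 2: for |k| < N(h) the normalized eigenfunctions Ψ_{k,t} of L_t are uniformly bounded on [0,1], uniformly in t in a punctured neighborhood of any singular quasimomentum t_j.) -/

import Mathlib

open MeasureTheory Filter Finset Complex

noncomputable section

namespace SpectralExp

/-- inner product on ℂ^m, linear in the first argument. -/
def ipV {m : ℕ} (u v : Fin m → ℂ) : ℂ := ∑ i, u i * (starRingEnd ℂ) (v i)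

/-- euclidean norm on ℂ^m -/
def vnorm {m : ℕ} (v : Fin m → ℂ) : ℝ := Real.sqrt (∑ i, ‖v i‖ ^ 2)

/-- L² inner product over [a,b], (f,g) = ∫ ⟨f(x),g(x)⟩ dx -/
def L2ipOn {m : ℕ} (a b : ℝ) (f g : ℝ → Fin m → ℂ) : ℂ := ∫ x in a..b, ipV (f x) (g x)

def L2ip {m : ℕ} (f g : ℝ → Fin m → ℂ) : ℂ := L2ipOn 0 1 f g

def L2normOn {m : ℕ} (a b : ℝ) (f : ℝ → Fin m → ℂ) : ℝ :=
  Real.sqrt (∫ x in a..b, ∑ i, ‖f x i‖ ^ 2)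

def L2norm {m : ℕ} (f : ℝ → Fin m → ℂ) : ℝ := L2normOn 0 1 f

/-- convergence of a sequence of functions in the L²(a,b) norm -/
def L2TendstoOn {m : ℕ} (a b : ℝ) (F : ℕ → ℝ → Fin m → ℂ) (g : ℝ → Fin m → ℂ) : Prop :=
  Tendsto (fun s => L2normOn a b (fun x => F s x - g x)) atTop (nhds 0)

/-- z·(P₂ y^{(n−2)} + … + P_n y)(x) -/
def pertExpr (n m : ℕ) (P : ℕ → ℝ → Matrix (Fin m) (Fin m) ℂ) (z : ℝ)
    (y : ℝ → Fin m → ℂ) (x : ℝ) : Fin m → ℂ :=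
  (z : ℂ) • ∑ ν ∈ Finset.Icc 2 n, (P ν x).mulVec (iteratedDeriv (n - ν) y x)

/-- `y` belongs to the domain of L_{t,z} (boundary conditions, y^{(n-1)} absolutely
continuous on [0,1]) and L_{t,z} y = Ly almost everywhere on [0,1]. -/
def InDomRel (n m : ℕ) (P : ℕ → ℝ → Matrix (Fin m) (Fin m) ℂ) (t : ℂ) (z : ℝ)
    (y Ly : ℝ → Fin m → ℂ) : Prop :=
  ContDiff ℝ (↑(n - 1)) y ∧
  (∀ ν < n, iteratedDeriv ν y 1 = Complex.exp (Complex.I * t) • iteratedDeriv ν y 0) ∧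
  ∃ g : ℝ → Fin m → ℂ, IntegrableOn g (Set.Icc 0 1) ∧
    (∀ x ∈ Set.Icc (0:ℝ) 1,
      iteratedDeriv (n - 1) y x = iteratedDeriv (n - 1) y 0 + ∫ s in (0:ℝ)..x, g s) ∧
    (∀ᵐ x ∂(volume.restrict (Set.Icc (0:ℝ) 1)), Ly x = g x + pertExpr n m P z y x)

/-- λ is an eigenvalue of L_{t,z} with eigenfunction Ψ -/
def IsEigenpair (n m : ℕ) (P : ℕ → ℝ → Matrix (Fin m) (Fin m) ℂ) (t : ℂ) (z : ℝ)
    (lam : ℂ) (Ψ : ℝ → Fin m → ℂ) : Prop :=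
  (∃ x ∈ Set.Icc (0:ℝ) 1, Ψ x ≠ 0) ∧ InDomRel n m P t z Ψ (fun x => lam • Ψ x)

def IsEigenvalue (n m : ℕ) (P : ℕ → ℝ → Matrix (Fin m) (Fin m) ℂ) (t : ℂ) (z : ℝ)
    (lam : ℂ) : Prop := ∃ Ψ, IsEigenpair n m P t z lam Ψ

/-- y₀ belongs to the root subspace of L_{t,z} at λ -/
def InRootSpace (n m : ℕ) (P : ℕ → ℝ → Matrix (Fin m) (Fin m) ℂ) (t : ℂ) (z : ℝ)
    (lam : ℂ) (y₀ : ℝ → Fin m → ℂ) : Prop :=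
  ∃ p : ℕ, ∃ y : ℕ → ℝ → Fin m → ℂ, y 0 = y₀ ∧ y p = 0 ∧
    ∀ i < p, InDomRel n m P t z (y i) (fun x => lam • y i x + y (i + 1) x)

/-- algebraic multiplicity of λ as an eigenvalue of L_{t,z}: the dimension of the root
subspace, as the supremum of cardinalities of linearly independent families of root functions -/
def algMult (n m : ℕ) (P : ℕ → ℝ → Matrix (Fin m) (Fin m) ℂ) (t : ℂ) (z : ℝ)
    (lam : ℂ) : ℕ :=
  sSup {d : ℕ | ∃ y : Fin d → ℝ → Fin m → ℂ,
    LinearIndependent ℂ y ∧ ∀ i, InRootSpace n m P t z lam (y i)}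

/-- the standing conditions on the coefficients: periodicity and p^{(n-ν)} ∈ L²[0,1] -/
def CoeffCond (n m : ℕ) (P : ℕ → ℝ → Matrix (Fin m) (Fin m) ℂ) : Prop :=
  ∀ ν, 2 ≤ ν → ν ≤ n →
    (∀ x, P ν (x + 1) = P ν x) ∧
    (∀ i j k, k < n - ν → Differentiable ℝ (iteratedDeriv k fun x => P ν x i j)) ∧
    (∀ i j, MemLp (iteratedDeriv (n - ν) fun x => P ν x i j) 2
      (volume.restrict (Set.Icc (0:ℝ) 1)))

/-- the eigenvalues of an m×m matrix are all simple (m distinct roots of the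
characteristic polynomial) -/
def SimpleSpectrum (m : ℕ) (C : Matrix (Fin m) (Fin m) ℂ) : Prop :=
  ∃ μ : Fin m → ℂ, Function.Injective μ ∧ ∀ j, (C - μ j • 1).det = 0

/-- integral over the upper semicircle {|t-c| = r, Im t > 0}, traversed from c-r to c+r -/
def arcUpper (m : ℕ) (c r : ℝ) (F : ℂ → Fin m → ℂ) : Fin m → ℂ :=
  ∫ s in (0:ℝ)..Real.pi,
    (-(Complex.I) * (r:ℂ) * Complex.exp ((↑(Real.pi - s)) * Complex.I)) •
      F ((c : ℂ) + (r : ℂ) * Complex.exp ((↑(Real.pi - s)) * Complex.I))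

/-- integral over the lower semicircle {|t-c| = r, Im t < 0}, traversed from c-r to c+r -/
def arcLower (m : ℕ) (c r : ℝ) (F : ℂ → Fin m → ℂ) : Fin m → ℂ :=
  ∫ s in (0:ℝ)..Real.pi,
    (Complex.I * (r:ℂ) * Complex.exp ((↑(Real.pi + s)) * Complex.I)) •
      F ((c : ℂ) + (r : ℂ) * Complex.exp ((↑(Real.pi + s)) * Complex.I))

/-- the real part r(h,ε) of the curve l₊(h,ε) -/
def rSet (h ε : ℝ) {v : ℕ} (ts : Fin v → ℝ) : Set ℝ :=
  (Set.Icc h (Real.pi - h) ∪ Set.Icc (Real.pi + h) (2 * Real.pi - h)) \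
    ⋃ j, Set.Ioo (ts j - ε) (ts j + ε)

/-- the open set D₊(h,ε) enclosed by l₊(h,ε) and [-h,2π-h] -/
def Dplus (h ε : ℝ) {v : ℕ} (ts : Fin v → ℝ) : Set ℂ :=
  {t | 0 < t.im ∧ (‖t‖ < h ∨ ‖t - Real.pi‖ < h ∨
    ∃ j, ‖t - ts j‖ < ε)}

def Dminus (h ε : ℝ) {v : ℕ} (ts : Fin v → ℝ) : Set ℂ :=
  {t | (starRingEnd ℂ) t ∈ Dplus h ε ts}

/-- the Gelfand transform f_t(x) = Σ_{k∈ℤ} f(x+k) e^{-ikt} -/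
def gelfand (m : ℕ) (f : ℝ → Fin m → ℂ) (t : ℂ) (x : ℝ) : Fin m → ℂ :=
  ∑' k : ℤ, Complex.exp (-(k : ℂ) * Complex.I * t) • f (x + (k : ℝ))

/-- membership of the decomposition f = f⁺ + f⁻ in the class W -/
structure InW (m : ℕ) (h ε : ℝ) {v : ℕ} (ts : Fin v → ℝ) (f fp fm : ℝ → Fin m → ℂ) : Prop where
  decomp : ∀ x, f x = fp x + fm x
  mem_f : MemLp f 2 volume
  mem_fp : MemLp fp 2 volume
  mem_fm : MemLp fm 2 volume
  cont_fp : ContinuousOn (fun q : ℝ × ℂ => gelfand m fp q.2 q.1)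
    (Set.Icc 0 1 ×ˢ (closure (Dplus h ε ts) ∪ (Complex.ofReal '' Set.Icc (-h) (2 * Real.pi - h))))
  cont_fm : ContinuousOn (fun q : ℝ × ℂ => gelfand m fm q.2 q.1)
    (Set.Icc 0 1 ×ˢ (closure (Dminus h ε ts) ∪ (Complex.ofReal '' Set.Icc (-h) (2 * Real.pi - h))))
  anal_fp : ∀ᵐ x ∂(volume.restrict (Set.Icc (0:ℝ) 1)),
    DifferentiableOn ℂ (fun t => gelfand m fp t x) (Dplus h ε ts)
  anal_fm : ∀ᵐ x ∂(volume.restrict (Set.Icc (0:ℝ) 1)),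
    DifferentiableOn ℂ (fun t => gelfand m fm t x) (Dminus h ε ts)

/-- the set of indices k ∈ ℤ with N ≤ |k| ≤ s -/
def bigIdx (N s : ℕ) : Finset ℤ :=
  (Finset.Icc (-(s : ℤ)) (s : ℤ)).filter fun k => (N : ℤ) ≤ |k|


/-- ((2πk + c)·i)^n -/
def freqPow (c : ℝ) (k : ℤ) (n : ℕ) : ℂ :=
  (((2 * Real.pi * (k : ℝ) + c : ℝ) : ℂ) * Complex.I) ^ n

end SpectralExp

open SpectralExp

namespace SpectralExp

/-- first-order Taylor estimate on the segment between `x` and `z` -/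
lemma taylor_aux {E : Type*} [NormedAddCommGroup E] [NormedSpace ℝ E]
    (f fd : ℝ → E) (x z h B S : ℝ)
    (hx : x ∈ Set.Icc (0:ℝ) 1) (hz : z ∈ Set.Icc (0:ℝ) 1) (hh : |z - x| = h)
    (hf : ∀ u ∈ Set.Icc (0:ℝ) 1, HasDerivAt f (fd u) u)
    (hS : ∀ u ∈ Set.Icc (0:ℝ) 1, ‖f u‖ ≤ S)
    (hB : ∀ u ∈ Set.Icc (0:ℝ) 1, |u - x| ≤ h → ‖fd u - fd x‖ ≤ B) :
    h * ‖fd x‖ ≤ 2 * S + B * h := by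
  have hsub : Set.uIcc x z ⊆ Set.Icc (0:ℝ) 1 := Set.uIcc_subset_Icc hx hz
  have hd : ∀ u ∈ Set.uIcc x z,
      HasDerivWithinAt (fun u => f u - (u - x) • fd x) (fd u - fd x) (Set.uIcc x z) u := by
    intro u hu
    have h1 := hf u (hsub hu)
    have h2 : HasDerivAt (fun u : ℝ => (u - x) • fd x) ((1:ℝ) • fd x) u :=
      ((hasDerivAt_id u).sub_const x).smul_const (fd x)
    rw [one_smul] at h2
    exact (h1.sub h2).hasDerivWithinAt
  have hb : ∀ u ∈ Set.uIcc x z, ‖fd u - fd x‖ ≤ B := by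
    intro u hu
    refine hB u (hsub hu) ?_
    rw [← hh]
    exact Set.abs_sub_left_of_mem_uIcc hu
  have key := (convex_uIcc x z).norm_image_sub_le_of_norm_hasDerivWithin_le hd hb
    Set.left_mem_uIcc Set.right_mem_uIcc
  rw [Real.norm_eq_abs, hh] at key
  simp only [sub_self, zero_smul, sub_zero] at key
  have e : (z - x) • fd x = f z - f x - (f z - (z - x) • fd x - f x) := by abel
  have n1 : h * ‖fd x‖ = ‖(z - x) • fd x‖ := by rw [norm_smul, Real.norm_eq_abs, hh]
  rw [n1, e]
  calc _ ≤ ‖f z - f x‖ + ‖f z - (z - x) • fd x - f x‖ := norm_sub_le _ _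
    _ ≤ (‖f z‖ + ‖f x‖) + B * h := add_le_add (norm_sub_le _ _) key
    _ ≤ _ := by linarith [hS z hz, hS x hx]

/-- Landau inequality -/
lemma landau {E : Type*} [NormedAddCommGroup E] [NormedSpace ℝ E]
    (f fd fdd : ℝ → E) (h S0 S2 x : ℝ) (hh : 0 < h) (hh2 : h ≤ 1 / 2)
    (hx : x ∈ Set.Icc (0:ℝ) 1)
    (hf : ∀ u ∈ Set.Icc (0:ℝ) 1, HasDerivAt f (fd u) u)
    (hfd : ∀ u ∈ Set.Icc (0:ℝ) 1, HasDerivAt fd (fdd u) u)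
    (hS0 : ∀ u ∈ Set.Icc (0:ℝ) 1, ‖f u‖ ≤ S0)
    (hS2 : ∀ u ∈ Set.Icc (0:ℝ) 1, ‖fdd u‖ ≤ S2) :
    ‖fd x‖ ≤ 2 / h * S0 + h * S2 := by
  have hS2n : 0 ≤ S2 := (norm_nonneg _).trans (hS2 x hx)
  obtain ⟨z, hz, hzx⟩ : ∃ z ∈ Set.Icc (0:ℝ) 1, |z - x| = h := by
    rcases le_total x (1/2) with h1 | h1
    · exact ⟨x + h, ⟨by linarith [hx.1], by linarith⟩, by simp [abs_of_pos hh]⟩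
    · exact ⟨x - h, ⟨by linarith, by linarith [hx.2]⟩, by simp [abs_of_pos hh]⟩
  have key := taylor_aux f fd x z h (S2 * h) S0 hx hz hzx hf hS0 (by
    intro u hu hux
    have := (convex_Icc (0:ℝ) 1).norm_image_sub_le_of_norm_hasDerivWithin_le
      (fun v hv => (hfd v hv).hasDerivWithinAt) hS2 hx hu
    refine this.trans ?_
    rw [Real.norm_eq_abs]
    gcongr)
  have : ‖fd x‖ = (h * ‖fd x‖) / h := by field_simp
  rw [this, div_le_iff₀ hh]
  have e : (2 / h * S0 + h * S2) * h = 2 * S0 + S2 * h * h := by field_simp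
  rw [e]; exact key

/-- the sequences of sup norms we consider -/
def GoodSeq (N : ℕ) (s : ℕ → ℝ) : Prop :=
  (∀ k, 0 ≤ s k) ∧ s 0 ≤ 1 ∧
    ∀ k < N, ∀ h : ℝ, 0 < h → h ≤ 1 / 2 → s (k + 1) ≤ 2 / h * s k + h * s (k + 2)

lemma interp_succ (N k : ℕ) (hk : k ≤ N) : ∀ ε : ℝ, 0 < ε → ∃ C : ℝ, 0 < C ∧
    ∀ s, GoodSeq N s → s k ≤ ε * s (k + 1) + C := by
  induction k with
  | zero =>
    intro ε hε
    refine ⟨1, one_pos, fun s hs => ?_⟩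
    have := mul_nonneg hε.le (hs.1 1)
    have := hs.2.1
    simp only [zero_add]; linarith
  | succ k ih =>
    intro ε hε
    set h := min (ε / 2) (1 / 2) with hh
    have hpos : 0 < h := by positivity
    obtain ⟨C, hC, hsC⟩ := ih (by omega) (h / 4) (by positivity)
    refine ⟨4 / h * C, by positivity, fun s hs => ?_⟩
    have h1 := hs.2.2 k (by omega) h hpos (min_le_right _ _)
    have h2 := hsC s hs
    have h3 : 2 / h * s k ≤ 2 / h * (h / 4 * s (k + 1) + C) := by gcongr
    have h4 : 2 / h * (h / 4 * s (k + 1) + C) = s (k + 1) / 2 + 2 / h * C := by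
      field_simp; ring
    have h5 : h * s (k + 2) ≤ ε / 2 * s (k + 2) :=
      mul_le_mul_of_nonneg_right (min_le_left _ _) (hs.1 _)
    have h6 : 4 / h * C = 2 * (2 / h * C) := by ring
    rw [h6]
    change s (k + 1) ≤ ε * s (k + 2) + _
    linarith

lemma interp_top (N : ℕ) (K : ℕ) (hK : K ≤ N + 1) : ∀ k < K, ∀ ε : ℝ, 0 < ε → ∃ C : ℝ, 0 < C ∧
    ∀ s, GoodSeq N s → s k ≤ ε * s K + C := by
  induction K with
  | zero => intro k hk; omega
  | succ K ih =>
    intro k hk ε hε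
    obtain ⟨C2, hC2, h2⟩ := interp_succ N K (by omega) ε hε
    rcases Nat.lt_succ_iff_lt_or_eq.mp hk with h | rfl
    · obtain ⟨C1, hC1, h1⟩ := ih (by omega) k h 1 one_pos
      exact ⟨C1 + C2, by positivity, fun s hs => by linarith [h1 s hs, h2 s hs]⟩
    · exact ⟨C2, hC2, h2⟩

lemma final_bound (N : ℕ) (A : ℝ) (hA : 0 < A) : ∃ c : ℝ, 0 < c ∧
    ∀ s, GoodSeq N s → s (N + 1) ≤ A * ∑ k ∈ Finset.range (N + 1), s k →
      ∀ k ≤ N, s k ≤ c := by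
  have hε : 0 < 1 / (2 * A * (N + 1)) := by positivity
  have H := fun k (hk : k < N + 1) => interp_top N (N + 1) le_rfl k hk _ hε
  choose C hC hCs using H
  set D : ℝ := ∑ k : Fin (N + 1), C k k.2 with hD
  have hD0 : 0 < D := Finset.sum_pos (fun k _ => hC k k.2) ⟨0, Finset.mem_univ _⟩
  have hCD : ∀ k (hk : k < N + 1), C k hk ≤ D := fun k hk =>
    Finset.single_le_sum (f := fun k : Fin (N + 1) => C k k.2) (fun i _ => (hC i i.2).le)
      (Finset.mem_univ (⟨k, hk⟩ : Fin (N + 1)))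
  have hN : (0:ℝ) < N + 1 := by positivity
  refine ⟨1 / (2 * A * (N + 1)) * (2 * A * (N + 1) * D) + D, by positivity, ?_⟩
  intro s hs hle
  have hk : ∀ k < N + 1, s k ≤ 1 / (2 * A * (N + 1)) * s (N + 1) + D := fun k hk =>
    (hCs k hk s hs).trans (by linarith [hCD k hk])
  have hsum : ∑ k ∈ Finset.range (N + 1), s k
      ≤ (N + 1) * (1 / (2 * A * (N + 1)) * s (N + 1) + D) := by
    have := Finset.sum_le_card_nsmul (Finset.range (N + 1)) s _
      (fun k hkN => hk k (Finset.mem_range.mp hkN))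
    rw [Finset.card_range, nsmul_eq_mul] at this
    push_cast at this
    exact this
  have htop : s (N + 1) ≤ 2 * A * (N + 1) * D := by
    have h1 : A * ∑ k ∈ Finset.range (N + 1), s k
      ≤ A * ((N + 1) * (1 / (2 * A * (N + 1)) * s (N + 1) + D)) := by gcongr
    have h2 : A * ((N + 1) * (1 / (2 * A * (N + 1)) * s (N + 1) + D))
       = s (N + 1) / 2 + A * (N + 1) * D := by field_simp
    linarith
  intro k hkN
  refine (hk k (by omega)).trans ?_
  gcongr

lemma mulVec_bound {m : ℕ} (Q : Matrix (Fin m) (Fin m) ℂ) (v : Fin m → ℂ) :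
    ‖Q.mulVec v‖ ≤ (∑ i, ∑ j, ‖Q i j‖) * ‖v‖ := by
  rw [pi_norm_le_iff_of_nonneg (by positivity)]
  intro i
  calc ‖Q.mulVec v i‖ = ‖∑ j, Q i j * v j‖ := rfl
    _ ≤ ∑ j, ‖Q i j * v j‖ := norm_sum_le _ _
    _ ≤ ∑ j, ‖Q i j‖ * ‖v‖ := by
        refine Finset.sum_le_sum fun j _ => ?_
        rw [norm_mul]
        exact mul_le_mul_of_nonneg_left (norm_le_pi_norm v j) (norm_nonneg _)
    _ = (∑ j, ‖Q i j‖) * ‖v‖ := by rw [Finset.sum_mul]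
    _ ≤ _ := by
        refine mul_le_mul_of_nonneg_right ?_ (norm_nonneg _)
        exact Finset.single_le_sum (f := fun i => ∑ j, ‖Q i j‖)
          (fun i _ => Finset.sum_nonneg fun j _ => norm_nonneg _) (Finset.mem_univ i)

/-- the coefficient majorant -/
def coeffMaj (n m : ℕ) (P : ℕ → ℝ → Matrix (Fin m) (Fin m) ℂ) (M : ℝ) (x : ℝ) : ℝ :=
  M + ∑ ν ∈ Finset.Icc 2 n, ∑ i, ∑ j, ‖P ν x i j‖

lemma coeffMaj_integrable (n m : ℕ) (P : ℕ → ℝ → Matrix (Fin m) (Fin m) ℂ)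
    (hP : CoeffCond n m P) (M : ℝ) :
    IntegrableOn (coeffMaj n m P M) (Set.Icc 0 1) := by
  unfold coeffMaj
  refine (integrable_const M).add ?_
  refine integrable_finsetSum _ fun ν hν => integrable_finsetSum _ fun i _ =>
    integrable_finsetSum _ fun j _ => Integrable.norm ?_
  rw [Finset.mem_Icc] at hν
  obtain ⟨-, h1, h2⟩ := hP ν hν.1 hν.2
  rcases Nat.eq_zero_or_pos (n - ν) with h0 | h0
  · have := h2 i j
    rw [h0, iteratedDeriv_zero] at this
    exact this.integrable (by norm_num)
  · have := h1 i j 0 h0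
    rw [iteratedDeriv_zero] at this
    exact this.continuous.continuousOn.integrableOn_Icc

/-- antiderivative followed by the successive derivatives -/
def chain {m : ℕ} (y : ℝ → Fin m → ℂ) : ℕ → ℝ → Fin m → ℂ
  | 0 => fun x => ∫ s in (0:ℝ)..x, y s
  | k + 1 => iteratedDeriv k y

lemma chain_deriv {m N : ℕ} (y : ℝ → Fin m → ℂ) (hy : ContDiff ℝ (N : ℕ) y) (k : ℕ)
    (hk : k ≤ N) (x : ℝ) : HasDerivAt (chain y k) (chain y (k + 1) x) x := by
  cases k with
  | zero =>
    simp only [chain, iteratedDeriv_zero]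
    have hc := hy.continuous
    exact intervalIntegral.integral_hasDerivAt_right (hc.intervalIntegrable _ _)
      hc.stronglyMeasurable.stronglyMeasurableAtFilter hc.continuousAt
  | succ k =>
    simp only [chain]
    have h := hy.differentiable_iteratedDeriv k (by exact_mod_cast hk)
    rw [iteratedDeriv_succ]
    exact (h x).hasDerivAt

lemma chain_cont {m N : ℕ} (y : ℝ → Fin m → ℂ) (hy : ContDiff ℝ (N : ℕ) y) (k : ℕ)
    (hk : k ≤ N + 1) : Continuous (chain y k) := by
  cases k with
  | zero => exact continuous_iff_continuousAt.mpr fun x =>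
      (chain_deriv y hy 0 (Nat.zero_le _) x).continuousAt
  | succ k => exact hy.continuous_iteratedDeriv k (by exact_mod_cast (by omega : k ≤ N))

/-- sup norm on `[0,1]` -/
def supn {m : ℕ} (f : ℝ → Fin m → ℂ) : ℝ := sSup ((fun x => ‖f x‖) '' Set.Icc (0:ℝ) 1)

lemma supn_nonneg {m : ℕ} (f : ℝ → Fin m → ℂ) : 0 ≤ supn f := by
  refine Real.sSup_nonneg ?_
  rintro _ ⟨x, -, rfl⟩
  exact norm_nonneg _

lemma le_supn {m : ℕ} (f : ℝ → Fin m → ℂ) (hf : Continuous f) (x : ℝ)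
    (hx : x ∈ Set.Icc (0:ℝ) 1) : ‖f x‖ ≤ supn f :=
  le_csSup (isCompact_Icc.image hf.norm).bddAbove ⟨x, hx, rfl⟩

lemma supn_le {m : ℕ} (f : ℝ → Fin m → ℂ) (c : ℝ)
    (h : ∀ x ∈ Set.Icc (0:ℝ) 1, ‖f x‖ ≤ c) : supn f ≤ c := by
  refine csSup_le ⟨_, 0, by simp, rfl⟩ ?_
  rintro _ ⟨x, hx, rfl⟩
  exact h x hx

lemma chain_zero_le {m : ℕ} (y : ℝ → Fin m → ℂ) (hy : Continuous y) (h1 : L2norm y = 1) :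
    ∀ x ∈ Set.Icc (0:ℝ) 1, ‖chain y 0 x‖ ≤ 1 := by
  intro x hx
  have hI : ∫ x in (0:ℝ)..1, ∑ i, ‖y x i‖ ^ 2 = 1 := by
    rw [L2norm, L2normOn, Real.sqrt_eq_one] at h1; exact h1
  have hc : Continuous fun x => ∑ i, ‖y x i‖ ^ 2 := by fun_prop
  calc ‖∫ s in (0:ℝ)..x, y s‖ ≤ ∫ s in (0:ℝ)..x, ‖y s‖ :=
        intervalIntegral.norm_integral_le_integral_norm hx.1
    _ ≤ ∫ s in (0:ℝ)..1, ‖y s‖ := by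
        refine intervalIntegral.integral_mono_interval le_rfl hx.1 hx.2
          (Filter.Eventually.of_forall fun _ => norm_nonneg _) (hy.norm.intervalIntegrable _ _)
    _ ≤ ∫ s in (0:ℝ)..1, ((1 / 2 : ℝ) + (1 / 2) * ∑ i, ‖y s i‖ ^ 2) := by
        refine intervalIntegral.integral_mono_on zero_le_one (hy.norm.intervalIntegrable _ _)
          ((continuous_const.add (continuous_const.mul hc)).intervalIntegrable _ _) ?_
        intro s _
        have hn : ‖y s‖ ≤ Real.sqrt (∑ i, ‖y s i‖ ^ 2) := by
          rw [pi_norm_le_iff_of_nonneg (Real.sqrt_nonneg _)]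
          intro i
          refine Real.le_sqrt_of_sq_le ?_
          exact Finset.single_le_sum (f := fun i => ‖y s i‖ ^ 2) (fun i _ => by positivity)
            (Finset.mem_univ i)
        have hq := Real.sq_sqrt (show 0 ≤ ∑ i, ‖y s i‖ ^ 2 by positivity)
        nlinarith [sq_nonneg (Real.sqrt (∑ i, ‖y s i‖ ^ 2) - 1)]
    _ = 1 := by
        rw [intervalIntegral.integral_add (continuous_const.intervalIntegrable _ _)
          ((show Continuous fun s => (1 / 2 : ℝ) * ∑ i, ‖y s i‖ ^ 2 from
            continuous_const.mul hc).intervalIntegrable _ _),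
          intervalIntegral.integral_const_mul, hI]
        norm_num

lemma goodSeq_chain {m N : ℕ} (y : ℝ → Fin m → ℂ) (hy : ContDiff ℝ (N : ℕ) y)
    (h1 : L2norm y = 1) : GoodSeq N (fun k => supn (chain y k)) := by
  refine ⟨fun k => supn_nonneg _, supn_le _ _ (chain_zero_le y hy.continuous h1), ?_⟩
  intro k hk h hh hh2
  refine supn_le _ _ fun x hx => ?_
  exact landau (chain y k) (chain y (k + 1)) (chain y (k + 2)) h _ _ x hh hh2 hx
    (fun u _ => chain_deriv y hy k (by omega) u)
    (fun u _ => chain_deriv y hy (k + 1) (by omega) u)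
    (le_supn _ (chain_cont y hy k (by omega)))
    (le_supn _ (chain_cont y hy (k + 2) (by omega)))

lemma top_bound {m N : ℕ} (hN : 1 ≤ N) (P : ℕ → ℝ → Matrix (Fin m) (Fin m) ℂ)
    (hP : CoeffCond (N + 1) m P) (M : ℝ) (t lam : ℂ) (y : ℝ → Fin m → ℂ)
    (hE : InDomRel (N + 1) m P t 1 y (fun x => lam • y x)) (hlam : ‖lam‖ ≤ M) :
    supn (chain y (N + 1)) ≤ (2 + 2 * ∫ x in (0:ℝ)..1, coeffMaj (N + 1) m P M x) *
      ∑ k ∈ Finset.range (N + 1), supn (chain y k) := by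
  obtain ⟨hy, -, g, hg, hgi, hge⟩ := hE
  simp only [Nat.add_sub_cancel] at hy hgi
  set T := ∑ k ∈ Finset.range (N + 1), supn (chain y k) with hT
  have hTk : ∀ k ≤ N, supn (chain y k) ≤ T := fun k hk =>
    Finset.single_le_sum (f := fun k => supn (chain y k)) (fun i _ => supn_nonneg _)
      (Finset.mem_range.mpr (by omega))
  have hT0 : 0 ≤ T := (supn_nonneg _).trans (hTk 0 (Nat.zero_le _))
  have hM0 : 0 ≤ M := (norm_nonneg _).trans hlam
  have hcm : ∀ x, 0 ≤ coeffMaj (N + 1) m P M x := fun x => by unfold coeffMaj; positivity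
  have hci := coeffMaj_integrable (N + 1) m P hP M
  have hyk : ∀ k < N, ∀ x ∈ Set.Icc (0:ℝ) 1, ‖iteratedDeriv k y x‖ ≤ T := fun k hk x hx =>
    (le_supn (chain y (k + 1)) (chain_cont y hy (k + 1) (by omega)) x hx).trans
      (hTk (k + 1) (by omega))
  have hgb : ∀ᵐ x ∂(volume.restrict (Set.Icc (0:ℝ) 1)),
      ‖g x‖ ≤ coeffMaj (N + 1) m P M x * T := by
    filter_upwards [hge, ae_restrict_mem measurableSet_Icc] with x hx hxI
    have e : g x = lam • y x - pertExpr (N + 1) m P 1 y x := by rw [hx]; abel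
    rw [e]
    refine (norm_sub_le _ _).trans ?_
    unfold coeffMaj pertExpr
    rw [add_mul]
    refine add_le_add ?_ ?_
    · rw [norm_smul]
      have := hyk 0 hN x hxI
      rw [iteratedDeriv_zero] at this
      gcongr
    · rw [Complex.ofReal_one, one_smul, Finset.sum_mul]
      refine (norm_sum_le _ _).trans (Finset.sum_le_sum fun ν hν => ?_)
      rw [Finset.mem_Icc] at hν
      refine (mulVec_bound _ _).trans ?_
      exact mul_le_mul_of_nonneg_left (hyk _ (by omega) x hxI) (by positivity)
  set A := ∫ x in (0:ℝ)..1, coeffMaj (N + 1) m P M x with hAdef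
  have hosc : ∀ x ∈ Set.Icc (0:ℝ) 1,
      ‖iteratedDeriv N y x - iteratedDeriv N y 0‖ ≤ A * T := by
    intro x hx
    rw [hgi x hx, add_sub_cancel_left]
    have hsub : Set.Ioc 0 x ⊆ Set.Icc (0:ℝ) 1 := fun u hu => ⟨hu.1.le, hu.2.trans hx.2⟩
    have hii : IntervalIntegrable (fun s => coeffMaj (N + 1) m P M s * T) volume 0 1 := by
      rw [intervalIntegrable_iff_integrableOn_Icc_of_le zero_le_one]
      exact hci.mul_const T
    calc ‖∫ s in (0:ℝ)..x, g s‖ ≤ ∫ s in (0:ℝ)..x, coeffMaj (N + 1) m P M s * T := by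
          refine intervalIntegral.norm_integral_le_of_norm_le hx.1 ?_ ?_
          · have := ae_restrict_of_ae_restrict_of_subset hsub hgb
            rwa [ae_restrict_iff' measurableSet_Ioc] at this
          · refine hii.mono_set ?_
            rw [Set.uIcc_of_le hx.1, Set.uIcc_of_le zero_le_one]
            exact Set.Icc_subset_Icc_right hx.2
      _ ≤ ∫ s in (0:ℝ)..1, coeffMaj (N + 1) m P M s * T :=
          intervalIntegral.integral_mono_interval le_rfl hx.1 hx.2
            (Filter.Eventually.of_forall fun s => mul_nonneg (hcm s) hT0) hii
      _ = A * T := by rw [intervalIntegral.integral_mul_const]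
  have h0 := taylor_aux (chain y N) (chain y (N + 1)) 0 1 1 (A * T) T (by simp) (by simp)
    (by simp) (fun u _ => chain_deriv y hy N le_rfl u)
    (fun u hu => (le_supn _ (chain_cont y hy N (by omega)) u hu).trans (hTk N le_rfl))
    (fun u hu _ => hosc u hu)
  refine supn_le _ _ fun x hx => ?_
  have h1 := hosc x hx
  have h2 := norm_le_norm_add_norm_sub' (chain y (N + 1) x) (chain y (N + 1) 0)
  simp only [chain] at h0 h2 ⊢
  linarith

lemma vnorm_le {m : ℕ} (v : Fin m → ℂ) : vnorm v ≤ Real.sqrt m * ‖v‖ := by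
  unfold vnorm
  rw [← Real.sqrt_sq (norm_nonneg v), ← Real.sqrt_mul (Nat.cast_nonneg m)]
  refine Real.sqrt_le_sqrt ?_
  have := Finset.sum_le_card_nsmul Finset.univ (fun i => ‖v i‖ ^ 2) (‖v‖ ^ 2)
    (fun i _ => by have := norm_le_pi_norm v i; gcongr)
  simpa using this

end SpectralExp

/-- **Lemma 2.** For every M > 0 there exists c > 0 such that for every real
t ∈ [0,2π] and every L²-normalized eigenfunction Ψ of L_t whose eigenvalue λ satisfies
|λ| ≤ M, one has |Ψ(x)| ≤ c for all x ∈ [0,1]. -/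
theorem statement14 (n m : ℕ) (hn : 2 ≤ n) (hm : 1 ≤ m)
    (P : ℕ → ℝ → Matrix (Fin m) (Fin m) ℂ) (hP : CoeffCond n m P)
    (M : ℝ) (hM : 0 < M) :
    ∃ c : ℝ, 0 < c ∧
      ∀ t : ℝ, t ∈ Set.Icc 0 (2 * Real.pi) →
        ∀ (lam : ℂ) (Ψ : ℝ → Fin m → ℂ),
          IsEigenpair n m P (t : ℂ) 1 lam Ψ → L2norm Ψ = 1 → ‖lam‖ ≤ M →
            ∀ x ∈ Set.Icc (0:ℝ) 1, vnorm (Ψ x) ≤ c := by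
  obtain ⟨N, rfl⟩ : ∃ N, n = N + 1 := ⟨n - 1, by omega⟩
  have hN : 1 ≤ N := by omega
  have hA0 : 0 ≤ ∫ x in (0:ℝ)..1, coeffMaj (N + 1) m P M x :=
    intervalIntegral.integral_nonneg zero_le_one fun x _ => by unfold coeffMaj; positivity
  obtain ⟨c, hc, H⟩ := final_bound N (2 + 2 * ∫ x in (0:ℝ)..1, coeffMaj (N + 1) m P M x)
    (by positivity)
  have hmpos : (0:ℝ) < m := by exact_mod_cast hm
  refine ⟨Real.sqrt m * c, by positivity, ?_⟩
  intro t _ lam Ψ hE hL hlam x hx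
  have hy : ContDiff ℝ (N : ℕ) Ψ := hE.2.1
  have h1 := H _ (goodSeq_chain Ψ hy hL) (top_bound hN P hP M t lam Ψ hE.2 hlam) 1 hN
  have h2 := le_supn (chain Ψ 1) (chain_cont Ψ hy 1 (by omega)) x hx
  simp only [chain, iteratedDeriv_zero] at h1 h2
  refine (vnorm_le _).trans ?_
  have := h2.trans h1
  gcongr
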